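/- arXiv:1901.07503 — 10 statements merged into one kernel-verified Lean document; each statement's English description precedes it below -/
import Mathlib

section
/- Let (X, Σ) be an implicational base with closure operator φ, let B⁺ and B⁻ be dual antichains of closed sets in the lattice L(Σ), and let H = {X \ B : B ∈ B⁺} be the complementary hypergraph of B⁺. Then for every transversal T of H there exists a set I ∈ B⁻ such that I ⊆ φ(T). In particular this holds for every minimal transversal of H. -/
/-- A set `C` is closed w.r.t. the implicational base `Sig`:
for every implication `(A, b) ∈ Sig`, if `A ⊆ C` then `b ∈ C`. -/
def ImpClosed {α : Type*} (Sig : Finset (Finset α × α)) (C : Set α) : Prop :=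
  ∀ p ∈ Sig, (p.1 : Set α) ⊆ C → p.2 ∈ C

/-- `phi` is the closure operator of the implicational base `Sig`:
`phi S` is the smallest closed set containing `S`. -/
def IsClosureOperator {α : Type*} (Sig : Finset (Finset α × α)) (phi : Set α → Set α) : Prop :=
  ∀ S : Set α, S ⊆ phi S ∧ ImpClosed Sig (phi S) ∧
    ∀ C : Set α, ImpClosed Sig C → S ⊆ C → phi S ⊆ C

/-- `T` is a transversal of the hypergraph `H`. -/
def IsTransversal {α : Type*} (H : Set (Set α)) (T : Set α) : Prop :=
  ∀ E ∈ H, (T ∩ E).Nonempty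

/-- `T` is an inclusion-minimal transversal of `H`. -/
def IsMinTransversal {α : Type*} (H : Set (Set α)) (T : Set α) : Prop :=
  IsTransversal H T ∧ ∀ T' : Set α, IsTransversal H T' → T' ⊆ T → T' = T

/-- The antichains `Bp` and `Bm` of closed sets are dual in the lattice of
closed sets of `Sig`: every closed set satisfies exactly one of the two conditions. -/
def AreDual {α : Type*} (Sig : Finset (Finset α × α)) (Bp Bm : Set (Set α)) : Prop :=
  ∀ C : Set α, ImpClosed Sig C → Xor' (∃ B ∈ Bp, C ⊆ B) (∃ I ∈ Bm, I ⊆ C)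

theorem stmt_0 {α : Type*} [DecidableEq α] [Fintype α]
    (Sig : Finset (Finset α × α)) (phi : Set α → Set α)
    (hphi : IsClosureOperator Sig phi) (Bp Bm : Set (Set α))
    (hBpClosed : ∀ B ∈ Bp, ImpClosed Sig B) (hBmClosed : ∀ I ∈ Bm, ImpClosed Sig I)
    (hBpAC : IsAntichain (· ⊆ ·) Bp) (hBmAC : IsAntichain (· ⊆ ·) Bm)
    (hdual : AreDual Sig Bp Bm)
    (H : Set (Set α)) (hH : H = (fun B => Bᶜ) '' Bp) :
    (∀ T : Set α, IsTransversal H T → ∃ I ∈ Bm, I ⊆ phi T) ∧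
    (∀ T : Set α, IsMinTransversal H T → ∃ I ∈ Bm, I ⊆ phi T) := by
  have key : ∀ T : Set α, IsTransversal H T → ∃ I ∈ Bm, I ⊆ phi T := by
    intro T hT
    obtain ⟨hsub, hcl, -⟩ := hphi T
    rcases hdual (phi T) hcl with ⟨⟨B, hB, hTB⟩, -⟩ | ⟨h, -⟩
    · obtain ⟨x, hxT, hxB⟩ := hT Bᶜ (by rw [hH]; exact ⟨B, hB, rfl⟩)
      exact absurd (hTB (hsub hxT)) hxB
    · exact h
  exact ⟨key, fun T hT => key T hT.1⟩
end

section
/- Let (X, Σ) be an implicational base with closure operator φ, let B⁺ be an antichain of closed sets, and let H = {X \ B : B ∈ B⁺} be its complementary hypergraph. If T is a transversal of H, then every minimal generating set T* of T (i.e., T* ⊆ T with T ⊆ φ(T*) and T ⊈ φ(T* \ {x}) for all x ∈ T*) is also a transversal of H. In particular, every minimal transversal of H is independent with respect to φ. -/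
/-- `T` is independent w.r.t. the closure operator `phi`. -/
def IsIndependent {α : Type*} (phi : Set α → Set α) (T : Set α) : Prop :=
  ∀ x ∈ T, x ∉ phi (T \ {x})

/-- `T` is a generating set of `I` w.r.t. `phi`. -/
def IsGeneratingSet {α : Type*} (phi : Set α → Set α) (I T : Set α) : Prop :=
  T ⊆ I ∧ I ⊆ phi T

/-- `T` is a minimal generating set of `I` w.r.t. `phi`. -/
def IsMinGeneratingSet {α : Type*} (phi : Set α → Set α) (I T : Set α) : Prop :=
  IsGeneratingSet phi I T ∧ ∀ x ∈ T, ¬ I ⊆ phi (T \ {x})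

theorem stmt_1 {α : Type*} [DecidableEq α] [Fintype α]
    (Sig : Finset (Finset α × α)) (phi : Set α → Set α)
    (hphi : IsClosureOperator Sig phi) (Bp : Set (Set α))
    (hBpClosed : ∀ B ∈ Bp, ImpClosed Sig B)
    (hBpAC : IsAntichain (· ⊆ ·) Bp)
    (H : Set (Set α)) (hH : H = (fun B => Bᶜ) '' Bp) :
    (∀ T T' : Set α, IsTransversal H T → IsMinGeneratingSet phi T T' → IsTransversal H T') ∧
    (∀ T : Set α, IsMinTransversal H T → IsIndependent phi T) := by
  have key : ∀ T T' : Set α, IsTransversal H T → T ⊆ phi T' → IsTransversal H T' := by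
    intro T T' hT hsub E hE
    have hE' := hE
    rw [hH] at hE'
    obtain ⟨B, hB, rfl⟩ := hE'
    by_contra hne
    have hTB : T' ⊆ B := by
      intro y hy
      by_contra hyB
      exact hne ⟨y, hy, hyB⟩
    obtain ⟨z, hzT, hzB⟩ := hT _ hE
    exact hzB ((hphi T').2.2 B (hBpClosed B hB) hTB (hsub hzT))
  refine ⟨fun T T' hT hG => key T T' hT hG.1.2, ?_⟩
  intro T hT x hx hmem
  have hsub : T ⊆ phi (T \ {x}) := by
    intro y hy
    by_cases hyx : y = x
    · rw [hyx]
      exact hmem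
    · exact (hphi (T \ {x})).1 ⟨hy, hyx⟩
  have heq := hT.2 _ (key T _ hT.1 hsub) Set.diff_subset
  have hx' : x ∈ T \ {x} := by
    rw [heq]
    exact hx
  exact hx'.2 rfl
end

section
/- Let (X, Σ) be an implicational base with closure operator φ, let B⁺ and B⁻ be dual antichains of closed sets in the lattice L(Σ), and let H = {X \ B : B ∈ B⁺} be the complementary hypergraph of B⁺. Then for every I ∈ B⁻ and every minimal generating set T of I, the set T is an inclusion-minimal transversal of H and φ(T) = I. In particular, every I ∈ B⁻ equals φ(T) for some T ∈ Tr(H). -/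
theorem stmt_2 {α : Type*} [DecidableEq α] [Fintype α]
    (Sig : Finset (Finset α × α)) (phi : Set α → Set α)
    (hphi : IsClosureOperator Sig phi) (Bp Bm : Set (Set α))
    (hBpClosed : ∀ B ∈ Bp, ImpClosed Sig B) (hBmClosed : ∀ I ∈ Bm, ImpClosed Sig I)
    (hBpAC : IsAntichain (· ⊆ ·) Bp) (hBmAC : IsAntichain (· ⊆ ·) Bm)
    (hdual : AreDual Sig Bp Bm)
    (H : Set (Set α)) (hH : H = (fun B => Bᶜ) '' Bp) :
    (∀ I ∈ Bm, ∀ T : Set α, IsMinGeneratingSet phi I T →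
        IsMinTransversal H T ∧ phi T = I) ∧
    (∀ I ∈ Bm, ∃ T : Set α, IsMinTransversal H T ∧ phi T = I) := by
  have key : ∀ I ∈ Bm, ∀ T : Set α, IsMinGeneratingSet phi I T →
      IsMinTransversal H T ∧ phi T = I := by
    rintro I hI T ⟨⟨hTI, hIT⟩, hmin⟩
    have hpT : phi T = I := Set.Subset.antisymm ((hphi T).2.2 I (hBmClosed I hI) hTI) hIT
    refine ⟨⟨?_, ?_⟩, hpT⟩
    · intro E hE
      rw [hH] at hE
      obtain ⟨B, hB, rfl⟩ := hE
      by_contra hne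
      have hTB : T ⊆ B := by
        intro x hx
        by_contra hxB
        exact hne ⟨x, hx, hxB⟩
      have hIB : I ⊆ B := hIT.trans ((hphi T).2.2 B (hBpClosed B hB) hTB)
      rcases hdual I (hBmClosed I hI) with h | h
      · exact h.2 ⟨I, hI, subset_rfl⟩
      · exact h.2 ⟨B, hB, hIB⟩
    · intro T' hT' hsub
      refine Set.Subset.antisymm hsub ?_
      intro x hx
      by_contra hxT'
      have h1 : phi (T \ {x}) ⊆ I :=
        (hphi _).2.2 I (hBmClosed I hI) (Set.diff_subset.trans hTI)
      rcases hdual _ (hphi (T \ {x})).2.1 with h | h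
      · obtain ⟨⟨B, hB, hsB⟩, -⟩ := h
        obtain ⟨y, hyT', hyB⟩ := hT' Bᶜ (by rw [hH]; exact ⟨B, hB, rfl⟩)
        apply hyB
        apply hsB
        apply (hphi (T \ {x})).1
        refine ⟨hsub hyT', ?_⟩
        rintro rfl
        exact hxT' hyT'
      · obtain ⟨⟨J, hJ, hJs⟩, -⟩ := h
        have hJI : J = I := hBmAC.eq hJ hI (hJs.trans h1)
        subst hJI
        exact hmin x hx hJs
  refine ⟨key, fun I hI => ?_⟩
  obtain ⟨T, hT⟩ := (Set.toFinite {T : Set α | IsGeneratingSet phi I T}).exists_minimal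
    ⟨I, subset_rfl, (hphi I).1⟩
  refine ⟨T, key I hI T ⟨hT.prop, fun x hx hc => ?_⟩⟩
  have := hT.le_of_le (y := T \ {x}) ⟨Set.diff_subset.trans hT.prop.1, hc⟩ Set.diff_subset
  exact (this hx).2 rfl
end

section
/- Let (X, Σ) be an implicational base with closure operator φ, let B⁺ and B⁻ be dual antichains of closed sets in the lattice L(Σ), and let H = {X \ B : B ∈ B⁺} be the complementary hypergraph of B⁺. If I ∈ B⁻ and T is an inclusion-minimal transversal of H such that I ⊆ φ(T), then T is a minimal covering set of I, that is, I ⊆ φ(T) and I ⊈ φ(T \ {x}) for every x ∈ T. -/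
/-- `T` is a minimal covering set of `I` w.r.t. `phi`. -/
def IsMinCoveringSet {α : Type*} (phi : Set α → Set α) (I T : Set α) : Prop :=
  I ⊆ phi T ∧ ∀ x ∈ T, ¬ I ⊆ phi (T \ {x})

theorem stmt_3 {α : Type*} [DecidableEq α] [Fintype α]
    (Sig : Finset (Finset α × α)) (phi : Set α → Set α)
    (hphi : IsClosureOperator Sig phi) (Bp Bm : Set (Set α))
    (hBpClosed : ∀ B ∈ Bp, ImpClosed Sig B) (hBmClosed : ∀ I ∈ Bm, ImpClosed Sig I)
    (hBpAC : IsAntichain (· ⊆ ·) Bp) (hBmAC : IsAntichain (· ⊆ ·) Bm)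
    (hdual : AreDual Sig Bp Bm)
    (H : Set (Set α)) (hH : H = (fun B => Bᶜ) '' Bp)
    (I : Set α) (hI : I ∈ Bm) (T : Set α) (hT : IsMinTransversal H T)
    (hIT : I ⊆ phi T) :
    IsMinCoveringSet phi I T := by
  refine ⟨hIT, fun x hx hsub => ?_⟩
  have htr : IsTransversal H (T \ {x}) := by
    subst hH
    rintro _ ⟨B, hB, rfl⟩
    by_contra hne
    have hTB : T \ {x} ⊆ B := by
      intro y hy
      by_contra hyB
      exact hne ⟨y, hy, hyB⟩
    have hIB : I ⊆ B := hsub.trans ((hphi _).2.2 B (hBpClosed B hB) hTB)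
    rcases hdual B (hBpClosed B hB) with h | h
    · exact h.2 ⟨I, hI, hIB⟩
    · exact h.2 ⟨B, hB, subset_rfl⟩
  have heq := hT.2 _ htr Set.diff_subset
  rw [← heq] at hx
  exact hx.2 rfl
end

section
/- Let (X, Σ) be an implicational base with closure operator φ and let I ⊆ X. Suppose T₁ and T₂ are minimal covering sets of I, and D ⊆ Σ is a set of implications such that: every premise of an implication of D is contained in T₁ ∩ T₂; T₁ \ I = T₂ \ I; and I ⊆ Tᵢ ∪ {b : (A → b) ∈ D} for both i = 1 and i = 2. Then T₁ = T₂. -/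
theorem stmt_9_aux {α : Type*} (Sig : Finset (Finset α × α)) (phi : Set α → Set α)
    (hphi : IsClosureOperator Sig phi) (I T₁ T₂ : Set α)
    (h₁ : IsMinCoveringSet phi I T₁)
    (D : Finset (Finset α × α)) (hD : D ⊆ Sig)
    (hprem : ∀ p ∈ D, (p.1 : Set α) ⊆ T₁ ∩ T₂)
    (hdiff : T₁ \ I = T₂ \ I)
    (hcov₂ : I ⊆ T₂ ∪ {b : α | ∃ A : Finset α, (A, b) ∈ D}) : T₁ ⊆ T₂ := by
  intro x hx
  by_contra hx2
  have hxI : x ∈ I := by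
    by_contra hI
    have h : x ∈ T₂ \ I := hdiff ▸ (⟨hx, hI⟩ : x ∈ T₁ \ I)
    exact hx2 h.1
  rcases hcov₂ hxI with h | ⟨A, hA⟩
  · exact hx2 h
  obtain ⟨hsub, hcl, -⟩ := hphi (T₁ \ {x})
  have hxphi : x ∈ phi (T₁ \ {x}) := by
    refine hcl (A, x) (hD hA) fun a ha => hsub ⟨(hprem _ hA ha).1, ?_⟩
    rintro rfl
    exact hx2 (hprem _ hA ha).2
  refine h₁.2 x hx (h₁.1.trans ((hphi T₁).2.2 _ hcl fun y hy => ?_))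
  by_cases hyx : y = x
  · exact hyx ▸ hxphi
  · exact hsub ⟨hy, hyx⟩

theorem stmt_9 {α : Type*} [DecidableEq α] [Fintype α]
    (Sig : Finset (Finset α × α)) (phi : Set α → Set α)
    (hphi : IsClosureOperator Sig phi)
    (I T₁ T₂ : Set α)
    (h₁ : IsMinCoveringSet phi I T₁) (h₂ : IsMinCoveringSet phi I T₂)
    (D : Finset (Finset α × α)) (hD : D ⊆ Sig)
    (hprem : ∀ p ∈ D, (p.1 : Set α) ⊆ T₁ ∩ T₂)
    (hdiff : T₁ \ I = T₂ \ I)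
    (hcov₁ : I ⊆ T₁ ∪ {b : α | ∃ A : Finset α, (A, b) ∈ D})
    (hcov₂ : I ⊆ T₂ ∪ {b : α | ∃ A : Finset α, (A, b) ∈ D}) :
    T₁ = T₂ := by
  exact Set.Subset.antisymm
    (stmt_9_aux Sig phi hphi I T₁ T₂ h₁ D hD hprem hdiff hcov₂)
    (stmt_9_aux Sig phi hphi I T₂ T₁ h₂ D hD
      (fun p hp => (hprem p hp).trans (Set.inter_comm T₁ T₂).subset) hdiff.symm hcov₁)
end

section
/- In the construction from the one-in-three 3SAT reduction: if T is a one-in-three truth assignment of φ, then T is closed in Σ, T ⊈ B_j for every j ∈ {1,…,m}, and F ⊈ T. Consequently T is a closed set witnessing that the antichains {B₁,…,B_m} and {F} are not dual in the lattice of closed sets of Σ. -/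
/-- The ground set of the reduction: `n` variable elements, `m` clause elements
`y₁, …, y_m`, and a special element `z`. -/
abbrev RedV (n m : ℕ) := Fin n ⊕ Fin m ⊕ Unit

/-- The variable element `xᵥ`. -/
def xv {n m : ℕ} (v : Fin n) : RedV n m := Sum.inl v

/-- The clause element `y_j`. -/
def yv {n m : ℕ} (j : Fin m) : RedV n m := Sum.inr (Sum.inl j)

/-- The special element `z`. -/
def zv {n m : ℕ} : RedV n m := Sum.inr (Sum.inr ())

/-- `C` is closed in the implicational base `Σ` of the reduction. -/
def RedClosed {n m : ℕ} (c : Fin m → Fin 3 → Fin n) (C : Set (RedV n m)) : Prop :=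
  (∀ (j : Fin m) (i₁ i₂ : Fin 3), i₁ ≠ i₂ →
      xv (c j i₁) ∈ C → xv (c j i₂) ∈ C → zv ∈ C) ∧
  (∀ (j : Fin m) (i : Fin 3), zv ∈ C → xv (c j i) ∈ C → yv j ∈ C) ∧
  (∀ j : Fin m, yv j ∈ C → zv ∈ C)

/-- The set `B_j = X \ ({y_j} ∪ C_j)`. -/
def RedB {n m : ℕ} (c : Fin m → Fin 3 → Fin n) (j : Fin m) : Set (RedV n m) :=
  ({yv j} ∪ Set.range (fun i : Fin 3 => xv (c j i)))ᶜ

/-- The set `F = {y₁, …, y_m, z}`. -/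
def RedF (n m : ℕ) : Set (RedV n m) :=
  Set.range (yv : Fin m → RedV n m) ∪ {zv}

/-- The antichains `B⁺ = {B₁, …, B_m}` and `B⁻ = {F}` are dual in the lattice of
closed sets: every closed set satisfies exactly one of the two conditions. -/
def RedDual {n m : ℕ} (c : Fin m → Fin 3 → Fin n) : Prop :=
  ∀ C : Set (RedV n m), RedClosed c C →
    Xor' (∃ j : Fin m, C ⊆ RedB c j) (RedF n m ⊆ C)

theorem stmt_11 (n m : ℕ) (c : Fin m → Fin 3 → Fin n)
    (hdist : ∀ j : Fin m, Function.Injective (c j))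
    (hvar : ∀ v : Fin n, ∃ (j : Fin m) (i : Fin 3), c j i = v)
    (T : Set (Fin n)) (hT : ∀ j : Fin m, ∃! i : Fin 3, c j i ∈ T) :
    RedClosed c (xv '' T) ∧
    (∀ j : Fin m, ¬ xv '' T ⊆ RedB c j) ∧
    ¬ RedF n m ⊆ xv '' T ∧
    ¬ RedDual c := by
  have hx : ∀ v : Fin n, (xv v : RedV n m) ∈ xv '' T ↔ v ∈ T := by
    intro v
    simp [xv]
  have hy : ∀ j : Fin m, (yv j : RedV n m) ∉ xv '' T := by
    intro j
    simp [xv, yv]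
  have hz : (zv : RedV n m) ∉ xv '' T := by
    simp [xv, zv]
  have hcl : RedClosed c (xv '' T) := by
    refine ⟨fun j i₁ i₂ hne h₁ h₂ => ?_, fun j i h _ => absurd h hz,
      fun j h => absurd h (hy j)⟩
    exact absurd ((hT j).unique ((hx _).1 h₁) ((hx _).1 h₂)) hne
  have hB : ∀ j : Fin m, ¬ xv '' T ⊆ RedB c j := by
    intro j hsub
    obtain ⟨i, hi, _⟩ := hT j
    exact hsub ((hx _).2 hi) (Or.inr ⟨i, rfl⟩)
  have hF : ¬ RedF n m ⊆ xv '' T := fun h => hz (h (Or.inr rfl))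
  refine ⟨hcl, hB, hF, fun hd => ?_⟩
  rcases hd _ hcl with ⟨⟨j, hj⟩, _⟩ | ⟨h, _⟩
  · exact hB j hj
  · exact hF h
end

section
/- In the construction from the one-in-three 3SAT reduction: if there exists a set C ⊆ X closed in Σ such that C ⊈ B_j for every j ∈ {1,…,m} and F ⊈ C, then φ admits a one-in-three truth assignment. -/
theorem stmt_12 (n m : ℕ) (c : Fin m → Fin 3 → Fin n)
    (hdist : ∀ j : Fin m, Function.Injective (c j))
    (hvar : ∀ v : Fin n, ∃ (j : Fin m) (i : Fin 3), c j i = v)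
    (C : Set (RedV n m)) (hC : RedClosed c C)
    (hCB : ∀ j : Fin m, ¬ C ⊆ RedB c j) (hCF : ¬ RedF n m ⊆ C) :
    ∃ T : Set (Fin n), ∀ j : Fin m, ∃! i : Fin 3, c j i ∈ T := by
  obtain ⟨h1, h2, h3⟩ := hC
  have key : ∀ j : Fin m, yv j ∈ C ∨ ∃ i : Fin 3, xv (c j i) ∈ C := by
    intro j
    obtain ⟨a, haC, haB⟩ := Set.not_subset.mp (hCB j)
    have ha := Set.notMem_compl_iff.mp haB
    rcases ha with ha | ⟨i, hi⟩
    · left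
      rw [Set.mem_singleton_iff] at ha
      exact ha ▸ haC
    · right
      refine ⟨i, ?_⟩
      have hi' : xv (c j i) = a := hi
      rw [hi']
      exact haC
  have hz : zv ∉ C := by
    intro hz
    apply hCF
    rintro a (⟨j, rfl⟩ | ha)
    · rcases key j with h | ⟨i, hi⟩
      · exact h
      · exact h2 j i hz hi
    · rw [Set.mem_singleton_iff] at ha
      rw [ha]
      exact hz
  refine ⟨{v | xv v ∈ C}, fun j => ?_⟩
  rcases key j with h | ⟨i, hi⟩
  · exact absurd (h3 j h) hz
  · refine ⟨i, hi, fun k hk => ?_⟩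
    by_contra hne
    exact hz (h1 j k i hne hk hi)
end

section
/- In the construction from the one-in-three 3SAT reduction, the antichains B⁺ = {B₁,…,B_m} and B⁻ = {F} are dual in the lattice of closed sets of Σ if and only if φ admits no one-in-three truth assignment. -/
theorem stmt_13 (n m : ℕ) (c : Fin m → Fin 3 → Fin n)
    (hdist : ∀ j : Fin m, Function.Injective (c j))
    (hvar : ∀ v : Fin n, ∃ (j : Fin m) (i : Fin 3), c j i = v) :
    RedDual c ↔ ¬ ∃ T : Set (Fin n), ∀ j : Fin m, ∃! i : Fin 3, c j i ∈ T := by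
  constructor
  · rintro hd ⟨T, hT⟩
    have hcl : RedClosed c {a : RedV n m | ∃ v, v ∈ T ∧ xv v = a} := by
      refine ⟨?_, ?_, ?_⟩
      · rintro j i₁ i₂ hne ⟨a, ha, hae⟩ ⟨b, hb, hbe⟩
        have h1 : a = c j i₁ := Sum.inl.inj hae
        have h2 : b = c j i₂ := Sum.inl.inj hbe
        subst h1 h2
        exact absurd ((hT j).unique ha hb) hne
      · rintro j i ⟨a, _, hae⟩ _
        simp [xv, zv] at hae
      · rintro j ⟨a, _, hae⟩
        simp [xv, yv] at hae
    rcases hd _ hcl with ⟨⟨j, hj⟩, _⟩ | ⟨hF, _⟩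
    · obtain ⟨i, hi, _⟩ := hT j
      exact hj ⟨_, hi, rfl⟩ (Or.inr ⟨i, rfl⟩)
    · obtain ⟨a, _, hae⟩ := hF (Or.inr rfl : zv ∈ RedF n m)
      simp [xv, zv] at hae
  · intro hno C hC
    obtain ⟨h1, h2, h3⟩ := hC
    by_cases hF : RedF n m ⊆ C
    · refine Or.inr ⟨hF, ?_⟩
      rintro ⟨j, hj⟩
      exact hj (hF (Or.inl ⟨j, rfl⟩)) (Or.inl rfl)
    · refine Or.inl ⟨?_, hF⟩
      by_contra hB
      have key : ∀ j : Fin m, yv j ∈ C ∨ ∃ i, xv (c j i) ∈ C := by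
        intro j
        by_contra hj
        push Not at hj
        refine hB ⟨j, ?_⟩
        rintro a ha (rfl | ⟨i, rfl⟩)
        · exact hj.1 ha
        · exact hj.2 i ha
      by_cases hz : (zv : RedV n m) ∈ C
      · apply hF
        rintro a (⟨j, rfl⟩ | rfl)
        · rcases key j with h | ⟨i, h⟩
          · exact h
          · exact h2 j i hz h
        · exact hz
      · refine hno ⟨{v | xv v ∈ C}, fun j => ?_⟩
        rcases key j with h | ⟨i, h⟩
        · exact absurd (h3 j h) hz
        · refine ⟨i, h, fun k hk => ?_⟩
          by_contra hne
          exact hz (h1 j k i hne hk h)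
end

section
/- Let (X, Σ) be an implicational base of dimension one (every premise is a singleton) with closure operator φ, and suppose the relation ⊑ defined by x ⊑ y iff x ∈ φ({y}) is antisymmetric, so that (X, ⊑) is a partial order (the underlying poset of Σ). If Σ has independent-width one, then the underlying poset contains no 2+2, i.e., there are no four elements a, b, c, d with b ⊑ a, b ≠ a, d ⊑ c, d ≠ c, such that each of a and b is ⊑-incomparable with each of c and d. In other words, the underlying poset of Σ is an interval order. -/
/-- A finite set `S` of implications is independent w.r.t. `phi`. -/
def IndepImps {α : Type*} [DecidableEq α] (phi : Set α → Set α)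
    (S : Finset (Finset α × α)) : Prop :=
  ∀ p ∈ S, p.2 ∉ phi (((S.erase p).biUnion Prod.fst : Finset α) : Set α)

/-- The independent-width of `Sig`: the maximum cardinality of an independent
subset of implications of `Sig`. -/
noncomputable def indepWidth {α : Type*} [DecidableEq α] (phi : Set α → Set α)
    (Sig : Finset (Finset α × α)) : ℕ :=
  sSup {n : ℕ | ∃ S ⊆ Sig, IndepImps phi S ∧ S.card = n}

theorem exists_last_imp {α : Type*} (Sig : Finset (Finset α × α)) (phi : Set α → Set α)
    (hphi : IsClosureOperator Sig phi) (a b : α) (hb : b ∈ phi {a}) (hne : b ≠ a) :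
    ∃ p ∈ Sig, p.2 = b ∧ (p.1 : Set α) ⊆ phi {a} := by
  by_contra hcon
  have hcl : ImpClosed Sig (phi {a} \ {b}) := by
    intro p hp hsub
    have h1 : (p.1 : Set α) ⊆ phi {a} := fun x hx => (hsub hx).1
    exact ⟨(hphi {a}).2.1 p hp h1, fun h => hcon ⟨p, hp, h, h1⟩⟩
  have ha : ({a} : Set α) ⊆ phi {a} \ {b} := by
    intro x hx
    refine ⟨(hphi {a}).1 hx, fun h => hne ?_⟩
    rw [Set.mem_singleton_iff] at hx h
    exact h.symm.trans hx
  exact ((hphi {a}).2.2 _ hcl ha hb).2 rfl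

/-- In the underlying poset `x ⊑ y ↔ x ∈ phi {y}` of an implicational base of
dimension one and independent-width one, there is no induced `2+2`,
i.e. the underlying poset is an interval order. -/
theorem stmt_14 {α : Type*} [DecidableEq α] [Fintype α]
    (Sig : Finset (Finset α × α)) (phi : Set α → Set α)
    (hphi : IsClosureOperator Sig phi)
    (hdim : ∀ p ∈ Sig, p.1.card = 1)
    (hantisymm : ∀ x y : α, x ∈ phi {y} → y ∈ phi {x} → x = y)
    (hwidth : indepWidth phi Sig = 1) :
    ∀ a b c d : α, b ∈ phi {a} → b ≠ a → d ∈ phi {c} → d ≠ c →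
      ¬ ((a ∉ phi {c} ∧ c ∉ phi {a}) ∧ (a ∉ phi {d} ∧ d ∉ phi {a}) ∧
         (b ∉ phi {c} ∧ c ∉ phi {b}) ∧ (b ∉ phi {d} ∧ d ∉ phi {b})) := by
  rintro a b c d hb hba hd hdc ⟨-, ⟨-, hda⟩, ⟨hbc, -⟩, -⟩
  obtain ⟨p, hp, hpb, hpa⟩ := exists_last_imp Sig phi hphi a b hb hba
  obtain ⟨q, hq, hqd, hqc⟩ := exists_last_imp Sig phi hphi c d hd hdc
  have hpq : p ≠ q := by
    rintro rfl
    apply hbc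
    rw [← hpb, hqd]
    exact hd
  have hind : IndepImps phi {p, q} := by
    intro r hr hmem
    rw [Finset.mem_insert, Finset.mem_singleton] at hr
    rcases hr with rfl | rfl
    · apply hbc
      rw [← hpb]
      refine (hphi _).2.2 _ (hphi {c}).2.1 ?_ hmem
      intro x hx
      simp only [Finset.coe_biUnion, Set.mem_iUnion, Finset.mem_coe, Finset.mem_erase,
        Finset.mem_insert, Finset.mem_singleton] at hx
      obtain ⟨t, ⟨ht, ht'⟩, hxt⟩ := hx
      rcases ht' with rfl | rfl
      · exact absurd rfl ht
      · exact hqc hxt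
    · apply hda
      rw [← hqd]
      refine (hphi _).2.2 _ (hphi {a}).2.1 ?_ hmem
      intro x hx
      simp only [Finset.coe_biUnion, Set.mem_iUnion, Finset.mem_coe, Finset.mem_erase,
        Finset.mem_insert, Finset.mem_singleton] at hx
      obtain ⟨t, ⟨ht, ht'⟩, hxt⟩ := hx
      rcases ht' with rfl | rfl
      · exact hpa hxt
      · exact absurd rfl ht
  have hle : 2 ≤ indepWidth phi Sig := by
    refine le_csSup ⟨Sig.card, ?_⟩ ⟨{p, q}, ?_, hind, Finset.card_pair hpq⟩
    · rintro n ⟨S, hS, -, rfl⟩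
      exact Finset.card_le_card hS
    · intro r hr
      rw [Finset.mem_insert, Finset.mem_singleton] at hr
      rcases hr with rfl | rfl <;> assumption
  omega
end

section
/- For every n ≥ 1, let X = {u₁, v₁, …, uₙ, vₙ} (2n distinct elements), let Σ = {{uᵢ} → vᵢ : i ∈ {1,…,n}}, let B⁺ = {X \ {uᵢ, vᵢ} : i ∈ {1,…,n}}, and let H = {X \ B : B ∈ B⁺} = {{uᵢ, vᵢ} : i ∈ {1,…,n}} be the complementary hypergraph. Then: (i) B⁺ is an antichain of closed sets of Σ; (ii) the dual antichain of B⁺ in the lattice of closed sets of Σ is B⁻ = {{v₁, …, vₙ}}, i.e., {v₁,…,vₙ} is the unique inclusion-minimal closed set not contained in any member of B⁺; and (iii) Tr(H) = {{z₁,…,zₙ} : zᵢ ∈ {uᵢ, vᵢ} for each i}, so |Tr(H)| = 2ⁿ while |B⁻| = 1. -/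
/-- The ground set `X = {u₁, v₁, …, uₙ, vₙ}`, where `uᵢ = (i, false)` and
`vᵢ = (i, true)`. -/
abbrev ExV (n : ℕ) := Fin n × Bool

/-- `C` is closed w.r.t. the implicational base `Σ = {{uᵢ} → vᵢ : i}`. -/
def ExClosed {n : ℕ} (C : Set (ExV n)) : Prop :=
  ∀ i : Fin n, (i, false) ∈ C → (i, true) ∈ C

/-- The antichain `B⁺ = {X \ {uᵢ, vᵢ} : i}`. -/
def ExBp (n : ℕ) : Set (Set (ExV n)) :=
  Set.range fun i : Fin n => ({(i, false), (i, true)} : Set (ExV n))ᶜ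

/-- The hypergraph `H = {{uᵢ, vᵢ} : i}`. -/
def ExH (n : ℕ) : Set (Set (ExV n)) :=
  Set.range fun i : Fin n => ({(i, false), (i, true)} : Set (ExV n))

/-- The set `{v₁, …, vₙ}`. -/
def ExVs (n : ℕ) : Set (ExV n) := Set.range fun i : Fin n => ((i, true) : ExV n)

theorem ex_nonsub {n : ℕ} (C : Set (ExV n)) :
    (∀ B ∈ ExBp n, ¬ C ⊆ B) ↔ ∀ i, (i, false) ∈ C ∨ (i, true) ∈ C := by
  constructor
  · intro h i
    by_contra hc
    push Not at hc
    refine h _ ⟨i, rfl⟩ ?_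
    intro x hx hx'
    rcases hx' with rfl | rfl
    · exact hc.1 hx
    · exact hc.2 hx
  · rintro h _ ⟨i, rfl⟩ hs
    rcases h i with h1 | h1
    · exact hs h1 (Or.inl rfl)
    · exact hs h1 (Or.inr rfl)

theorem ex_trans {n : ℕ} (T : Set (ExV n)) :
    IsTransversal (ExH n) T ↔ ∀ i, (i, false) ∈ T ∨ (i, true) ∈ T := by
  constructor
  · intro h i
    obtain ⟨x, hx, hx'⟩ := h _ ⟨i, rfl⟩
    rcases hx' with rfl | rfl
    · exact Or.inl hx
    · exact Or.inr hx
  · rintro h _ ⟨i, rfl⟩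
    rcases h i with h1 | h1
    · exact ⟨_, h1, Or.inl rfl⟩
    · exact ⟨_, h1, Or.inr rfl⟩

theorem ex_vs_sub {n : ℕ} (C : Set (ExV n)) (hc : ExClosed C)
    (h : ∀ i, (i, false) ∈ C ∨ (i, true) ∈ C) : ExVs n ⊆ C := by
  rintro _ ⟨i, rfl⟩
  exact (h i).elim (hc i) id

theorem ex_choice_trans {n : ℕ} (f : Fin n → Bool) (i : Fin n) :
    (i, false) ∈ Set.range (fun i : Fin n => ((i, f i) : ExV n)) ∨
    (i, true) ∈ Set.range (fun i : Fin n => ((i, f i) : ExV n)) := by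
  cases h : f i
  · exact Or.inl ⟨i, by simp [h]⟩
  · exact Or.inr ⟨i, by simp [h]⟩

theorem ex_tr (n : ℕ) : {T : Set (ExV n) | IsMinTransversal (ExH n) T} =
      Set.range fun f : Fin n → Bool => Set.range fun i : Fin n => ((i, f i) : ExV n) := by
  ext T
  constructor
  · rintro ⟨h, hm⟩
    rw [ex_trans] at h
    have h' : ∀ i, ∃ b, (i, b) ∈ T := fun i => (h i).elim (fun a => ⟨_, a⟩) (fun a => ⟨_, a⟩)
    choose f hf using h'
    refine ⟨f, hm _ ((ex_trans _).2 (ex_choice_trans f)) ?_⟩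
    rintro _ ⟨i, rfl⟩
    exact hf i
  · rintro ⟨f, rfl⟩
    refine ⟨(ex_trans _).2 (ex_choice_trans f), ?_⟩
    intro T' hT' hs
    refine Set.Subset.antisymm hs ?_
    rintro _ ⟨i, rfl⟩
    have key : ∀ b, (i, b) ∈ T' → (i, f i) ∈ T' := by
      intro b hb
      obtain ⟨j, hj⟩ := hs hb
      simp only [Prod.mk.injEq] at hj
      obtain ⟨rfl, rfl⟩ := hj
      exact hb
    exact ((ex_trans _).1 hT' i).elim (key _) (key _)

theorem ex_inj (n : ℕ) : Function.Injective
    (fun f : Fin n → Bool => Set.range fun i : Fin n => ((i, f i) : ExV n)) := by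
  intro f g h
  funext i
  have : (i, f i) ∈ Set.range fun i : Fin n => ((i, g i) : ExV n) := by
    simp only at h
    rw [← h]
    exact ⟨i, rfl⟩
  obtain ⟨j, hj⟩ := this
  simp only [Prod.mk.injEq] at hj
  obtain ⟨rfl, hj⟩ := hj
  exact hj.symm

theorem stmt_15 (n : ℕ) (hn : 1 ≤ n) :
    -- H is the complementary hypergraph of B⁺
    ((fun B => Bᶜ) '' ExBp n = ExH n) ∧
    -- (i) B⁺ is an antichain of closed sets of Σ
    (IsAntichain (· ⊆ ·) (ExBp n) ∧ ∀ B ∈ ExBp n, ExClosed B) ∧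
    -- (ii) {v₁, …, vₙ} is the unique inclusion-minimal closed set not contained
    -- in any member of B⁺, i.e. the dual antichain of B⁺ is {{v₁, …, vₙ}}
    ({C : Set (ExV n) | ExClosed C ∧ (∀ B ∈ ExBp n, ¬ C ⊆ B) ∧
        ∀ C' : Set (ExV n), ExClosed C' → (∀ B ∈ ExBp n, ¬ C' ⊆ B) → C' ⊆ C → C' = C} =
      {ExVs n}) ∧
    -- (iii) Tr(H) is the set of all choice sets, so |Tr(H)| = 2^n while |B⁻| = 1
    ({T : Set (ExV n) | IsMinTransversal (ExH n) T} =
      Set.range fun f : Fin n → Bool => Set.range fun i : Fin n => ((i, f i) : ExV n)) ∧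
    {T : Set (ExV n) | IsMinTransversal (ExH n) T}.ncard = 2 ^ n ∧
    ({ExVs n} : Set (Set (ExV n))).ncard = 1 := by
  refine ⟨?_, ⟨?_, ?_⟩, ?_, ex_tr n, ?_, Set.ncard_singleton _⟩
  · ext E
    simp [ExBp, ExH]
  · rintro _ ⟨i, rfl⟩ _ ⟨j, rfl⟩ hne hs
    apply hne
    have hji : j = i := by
      by_contra hij
      have h1 : ((j, true) : ExV n) ∈ ({(i, false), (i, true)} : Set (ExV n))ᶜ := by
        simp [hij]
      exact hs h1 (Or.inr rfl)
    rw [hji]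
  · rintro _ ⟨i, rfl⟩ j hj
    simpa using hj
  · have hvc : ExClosed (ExVs n) := fun i _ => ⟨i, rfl⟩
    have hvt : ∀ i, (i, false) ∈ ExVs n ∨ (i, true) ∈ ExVs n := fun i => Or.inr ⟨i, rfl⟩
    ext C
    simp only [ex_nonsub, Set.mem_setOf_eq, Set.mem_singleton_iff]
    constructor
    · rintro ⟨hc, ht, hm⟩
      exact (hm _ hvc hvt (ex_vs_sub C hc ht)).symm
    · rintro rfl
      exact ⟨hvc, hvt, fun C' hc ht hs => Set.Subset.antisymm hs (ex_vs_sub C' hc ht)⟩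
  · rw [ex_tr, ← Set.image_univ, Set.ncard_image_of_injective _ (ex_inj n), Set.ncard_univ]
    simp
end
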